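/- Let k ∈ (0,1). Then I_2^− = −32(17 − 32k² + 32k⁴). Moreover, if k² is a rational number, then Kuznetsov's moment integral I_n^− is a rational number for every n ∈ ℕ. -/

import Mathlib

open MeasureTheory Real

/-- The complete elliptic integral of the first kind `K(k)`. -/
noncomputable def ellipticK (k : ℝ) : ℝ :=
  ∫ θ in (0 : ℝ)..(π / 2), (1 - k ^ 2 * Real.sin θ ^ 2) ^ (-(1 / 2) : ℝ)

/-- Kuznetsov's moment integral `I_n^+`, realizing
`(1/2)∫_ℝ x^n dx/(cos(√x K) + cosh(√x K'))` with `√x = i√(−x)` for `x < 0`. -/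
noncomputable def Iplus (k : ℝ) (n : ℕ) : ℝ :=
  (1 / 2) * (∫ x in Set.Ioi (0 : ℝ), x ^ n /
      (Real.cos (ellipticK k * Real.sqrt x) +
        Real.cosh (ellipticK (Real.sqrt (1 - k ^ 2)) * Real.sqrt x)))
  + ((-1 : ℝ) ^ n / 2) * (∫ x in Set.Ioi (0 : ℝ), x ^ n /
      (Real.cosh (ellipticK k * Real.sqrt x) +
        Real.cos (ellipticK (Real.sqrt (1 - k ^ 2)) * Real.sqrt x)))

/-- Kuznetsov's moment integral `I_n^−`, realizing
`∫_ℝ x^{n+1} dx/(cos(√x K) − cosh(√x K'))` with `√x = i√(−x)` for `x < 0`. -/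
noncomputable def Iminus (k : ℝ) (n : ℕ) : ℝ :=
  (∫ x in Set.Ioi (0 : ℝ), x ^ (n + 1) /
      (Real.cos (ellipticK k * Real.sqrt x) -
        Real.cosh (ellipticK (Real.sqrt (1 - k ^ 2)) * Real.sqrt x)))
  + (-1 : ℝ) ^ (n + 1) * (∫ x in Set.Ioi (0 : ℝ), x ^ (n + 1) /
      (Real.cosh (ellipticK k * Real.sqrt x) -
        Real.cos (ellipticK (Real.sqrt (1 - k ^ 2)) * Real.sqrt x)))

/-!
Expanding `1 / (cosh K't - cos Kt)` in exponentials and integrating termwise turns its moments into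
sums of inverse powers over two opposite quadrants of a coset of the lattice with periods `K ± iK'`.
Multiplication by `i` exchanges `K` and `K'`, so the two integrals in `I_n^−` together fill all four
quadrants, and `I_n^−` is `-2(-1)^n` times the derivative of order `2n + 2` of `f = ℘ - ℘(K)` at the
half period `K`.

There `f = f' = 0`, and `f'' = 6f² + 4Af + 2B`, so every derivative of `f` at `K` is an integer
polynomial in `A` and `B`. On the real line `f` is a solution that grows from its zero at `K` to its
pole at `2K`; integrating `f'² = 4f(f² + Af + B)` over this range expresses `K` as an elliptic
integral, and the rotated lattice does the same for `K'`. Since the ratio `K / K'` determines the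
modulus, `A = 2(1 - 2k²)` and `B = 1`.
-/

open Filter Set Topology ComplexConjugate PeriodPair
open scoped ContDiff

/-! ### Newton's equation and blow-up -/

section Newton

/-- `y'' = F(y)` on `s`, with the velocity `y'` carried along as a second function. -/
structure IsNewtonSolutionOn {E : Type*} [NormedAddCommGroup E] [NormedSpace ℝ E] (F : E → E)
    (y y' : ℝ → E) (s : Set ℝ) : Prop where
  hasDerivAt : ∀ t ∈ s, HasDerivAt y (y' t) t
  hasDerivAt_velocity : ∀ t ∈ s, HasDerivAt y' (F (y t)) t

namespace IsNewtonSolutionOn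

section NormedSpace

variable {E : Type*} [NormedAddCommGroup E] [NormedSpace ℝ E] {F : E → E} {y y' z z' : ℝ → E}
  {s s' : Set ℝ} {a b t₀ : ℝ}

lemma mono (hy : IsNewtonSolutionOn F y y' s) (h : s' ⊆ s) : IsNewtonSolutionOn F y y' s' :=
  ⟨fun t ht => hy.hasDerivAt t (h ht), fun t ht => hy.hasDerivAt_velocity t (h ht)⟩

lemma continuousOn (hy : IsNewtonSolutionOn F y y' s) : ContinuousOn y s :=
  fun t ht => (hy.hasDerivAt t ht).continuousAt.continuousWithinAt

lemma continuousOn_velocity (hy : IsNewtonSolutionOn F y y' s) : ContinuousOn y' s :=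
  fun t ht => (hy.hasDerivAt_velocity t ht).continuousAt.continuousWithinAt

lemma comp_const_sub (hy : IsNewtonSolutionOn F y y' s) (c : ℝ) :
    IsNewtonSolutionOn F (fun t => y (c - t)) (fun t => -y' (c - t)) ((fun t => c - t) ⁻¹' s) where
  hasDerivAt t ht := (hy.hasDerivAt _ ht).comp_const_sub c t
  hasDerivAt_velocity t ht := by
    simpa using ((hy.hasDerivAt_velocity _ ht).comp_const_sub c t).fun_neg

lemma of_zero_eq_zero (hF : F 0 = 0) : IsNewtonSolutionOn F (fun _ => 0) (fun _ => 0) s where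
  hasDerivAt t _ := hasDerivAt_const t 0
  hasDerivAt_velocity t _ := by simpa [hF] using hasDerivAt_const t (0 : E)

theorem eqOn_Ioo [CompleteSpace E] (hF : ContDiff ℝ 1 F) (ht₀ : t₀ ∈ Ioo a b)
    (hy : IsNewtonSolutionOn F y y' (Ioo a b)) (hz : IsNewtonSolutionOn F z z' (Ioo a b))
    (h : y t₀ = z t₀) (h' : y' t₀ = z' t₀) : EqOn y z (Ioo a b) := by
  have hv : ContDiff ℝ 1 fun x : E × E => (x.2, F x.1) := by fun_prop
  have hcurve := isMIntegralCurveOn_Ioo_eqOn_of_contMDiff_boundaryless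
    (I := modelWithCornersSelf ℝ (E × E)) (γ := fun t => (y t, y' t)) (γ' := fun t => (z t, z' t))
    ht₀ (contMDiff_vectorSpace_iff_contDiff.mpr hv)
    (fun t ht => ((hy.hasDerivAt t ht).prodMk
      (hy.hasDerivAt_velocity t ht)).hasFDerivAt.hasMFDerivAt.hasMFDerivWithinAt)
    (fun t ht => ((hz.hasDerivAt t ht).prodMk
      (hz.hasDerivAt_velocity t ht)).hasFDerivAt.hasMFDerivAt.hasMFDerivWithinAt)
    (by simp [h, h'])
  exact fun t ht => congrArg Prod.fst (hcurve ht)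

lemma eqOn_reflect_of_velocity_eq_zero [CompleteSpace E] (hF : ContDiff ℝ 1 F) {u r : ℝ}
    (hr : 0 < r) (hy : IsNewtonSolutionOn F y y' (Ioo (u - r) (u + r))) (hu : y' u = 0) :
    EqOn y (fun t => y (2 * u - t)) (Ioo (u - r) (u + r)) := by
  have hpre : (fun t => 2 * u - t) ⁻¹' Ioo (u - r) (u + r) = Ioo (u - r) (u + r) := by
    rw [preimage_const_sub_Ioo]
    congr 1 <;> ring
  have hu' : 2 * u - u = u := by ring
  refine eqOn_Ioo hF ⟨by linarith, by linarith⟩ hy (hpre ▸ hy.comp_const_sub (2 * u)) ?_ ?_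
  · rw [hu']
  · rw [hu', hu, neg_zero]

end NormedSpace

variable {F y y' : ℝ → ℝ} {p : ℝ}

theorem velocity_ne_zero_of_tendsto_atTop (hF : ContDiff ℝ 1 F)
    (hy : IsNewtonSolutionOn F y y' (Ioo (-p) p)) (htop : Tendsto y (𝓝[<] p) atTop)
    {u : ℝ} (hu : u ∈ Ioo 0 p) : y' u ≠ 0 := by
  -- otherwise `y` is symmetric about `u`, so it stays bounded near `p`
  intro hu0
  have hsymm := eqOn_reflect_of_velocity_eq_zero hF (sub_pos.mpr hu.2)
    (hy.mono (Ioo_subset_Ioo (by linarith [hu.1]) (by linarith))) hu0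
  have hcont : ContinuousAt (fun t => y (2 * u - t)) p :=
    ((hy.hasDerivAt (2 * u - p) ⟨by linarith [hu.1], by linarith [hu.2]⟩).comp_const_sub
      (2 * u) p).continuousAt
  have heq : y =ᶠ[𝓝[<] p] fun t => y (2 * u - t) := by
    filter_upwards [Ioo_mem_nhdsLT (show u - (p - u) < p by linarith [hu.2])] with t ht
    exact hsymm ⟨ht.1, by linarith [ht.2]⟩
  exact not_tendsto_nhds_of_tendsto_atTop (htop.congr' heq) _
    (hcont.tendsto.mono_left nhdsWithin_le_nhds)

theorem velocity_pos (hF : ContDiff ℝ 1 F) (hy : IsNewtonSolutionOn F y y' (Ioo (-p) p))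
    (htop : Tendsto y (𝓝[<] p) atTop) {t : ℝ} (ht : t ∈ Ioo 0 p) : 0 < y' t := by
  have hp : 0 < p := ht.1.trans ht.2
  have hsub : Ioo 0 p ⊆ Ioo (-p) p := Ioo_subset_Ioo_left (by linarith)
  obtain ⟨c, hc, hcpos⟩ : ∃ c ∈ Ioo 0 p, 0 < y' c := by
    obtain ⟨s, hs, hsp⟩ := ((htop.eventually_gt_atTop (y 0)).and (Ioo_mem_nhdsLT hp)).exists
    have hIcc : Icc 0 s ⊆ Ioo (-p) p := Icc_subset_Ioo (by linarith) hsp.2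
    obtain ⟨c, hc, hslope⟩ := exists_hasDerivAt_eq_slope y y' hsp.1 (hy.continuousOn.mono hIcc)
      fun t ht => hy.hasDerivAt t (hIcc (Ioo_subset_Icc_self ht))
    exact ⟨c, ⟨hc.1, hc.2.trans hsp.2⟩, hslope ▸ div_pos (sub_pos.mpr hs) (sub_pos.mpr hsp.1)⟩
  by_contra! hneg
  obtain ⟨d, hd, hd0⟩ := isPreconnected_Ioo.intermediate_value ht hc
    (hy.continuousOn_velocity.mono hsub) ⟨hneg, hcpos.le⟩
  exact velocity_ne_zero_of_tendsto_atTop hF hy htop hd hd0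

lemma lt_of_tendsto_atTop (hF : ContDiff ℝ 1 F) (hy : IsNewtonSolutionOn F y y' (Ioo (-p) p))
    (htop : Tendsto y (𝓝[<] p) atTop) {t : ℝ} (ht : t ∈ Ioo 0 p) : y 0 < y t := by
  have hsub : Ico 0 p ⊆ Ioo (-p) p := fun u hu => ⟨by linarith [hu.1, hu.2], hu.2⟩
  have hmono : StrictMonoOn y (Ico 0 p) := by
    refine strictMonoOn_of_deriv_pos (convex_Ico 0 p) (hy.continuousOn.mono hsub) fun u hu => ?_
    rw [interior_Ico] at hu
    rw [(hy.hasDerivAt u (hsub (Ioo_subset_Ico_self hu))).deriv]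
    exact velocity_pos hF hy htop hu
  exact hmono ⟨le_rfl, ht.1.trans ht.2⟩ (Ioo_subset_Ico_self ht) ht.1

lemma surjOn_Ioi (hp : 0 < p) (hy : IsNewtonSolutionOn F y y' (Ioo (-p) p))
    (htop : Tendsto y (𝓝[<] p) atTop) : SurjOn y (Ioo 0 p) (Ioi (y 0)) := by
  intro s hs
  obtain ⟨u, hsu, hu⟩ := ((htop.eventually_gt_atTop s).and (Ioo_mem_nhdsLT hp)).exists
  have hIcc : Icc 0 u ⊆ Ioo (-p) p := Icc_subset_Ioo (by linarith) hu.2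
  obtain ⟨t, ht, rfl⟩ := intermediate_value_Ioo hu.1.le (hy.continuousOn.mono hIcc) ⟨hs, hsu⟩
  exact ⟨t, ⟨ht.1, ht.2.trans hu.2⟩, rfl⟩

variable {A B : ℝ}

theorem quadratic_pos (hp : 0 < p)
    (hy : IsNewtonSolutionOn (fun x => 6 * x ^ 2 + 4 * A * x + 2 * B) y y' (Ioo (-p) p))
    (hsq : ∀ t ∈ Ioo (-p) p, y' t ^ 2 = 4 * y t * (y t ^ 2 + A * y t + B)) (h0 : y 0 = 0)
    (htop : Tendsto y (𝓝[<] p) atTop) {s : ℝ} (hs : 0 < s) : 0 < s ^ 2 + A * s + B := by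
  obtain ⟨t, ht, rfl⟩ := hy.surjOn_Ioi hp htop (h0.symm ▸ hs : s ∈ Ioi (y 0))
  have hvel := pow_pos (hy.velocity_pos (by fun_prop) htop ht) 2
  rw [hsq t ⟨by linarith [ht.1], ht.2⟩] at hvel
  exact pos_of_mul_pos_right hvel (by linarith)

theorem const_coeff_pos (hp : 0 < p)
    (hy : IsNewtonSolutionOn (fun x => 6 * x ^ 2 + 4 * A * x + 2 * B) y y' (Ioo (-p) p))
    (hsq : ∀ t ∈ Ioo (-p) p, y' t ^ 2 = 4 * y t * (y t ^ 2 + A * y t + B)) (h0 : y 0 = 0)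
    (htop : Tendsto y (𝓝[<] p) atTop) : 0 < B := by
  have hF : ContDiff ℝ 1 fun x : ℝ => 6 * x ^ 2 + 4 * A * x + 2 * B := by fun_prop
  have hnonneg : 0 ≤ B := by
    have hcont : Continuous fun s : ℝ => s ^ 2 + A * s + B := by fun_prop
    have hlim : Tendsto (fun s : ℝ => s ^ 2 + A * s + B) (𝓝[>] 0) (𝓝 B) := by
      simpa using (hcont.tendsto 0).mono_left nhdsWithin_le_nhds
    refine ge_of_tendsto hlim ?_
    filter_upwards [self_mem_nhdsWithin] with s hs using (hy.quadratic_pos hp hsq h0 htop hs).le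
  refine hnonneg.lt_of_ne' fun hB => ?_
  have h0mem : (0 : ℝ) ∈ Ioo (-p) p := ⟨by linarith, hp⟩
  have hvel : y' 0 = 0 := by simpa [h0] using hsq 0 h0mem
  have hzero := eqOn_Ioo hF h0mem hy (of_zero_eq_zero (by simp [hB])) h0 hvel
  have hhalf : p / 2 ∈ Ioo 0 p := ⟨by linarith, by linarith⟩
  have hlt := hy.lt_of_tendsto_atTop hF htop hhalf
  rw [h0, hzero ⟨by linarith, hhalf.2⟩] at hlt
  exact hlt.false

end IsNewtonSolutionOn

end Newton

/-! ### Elliptic integrals of the first kind -/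

section EllipticIntegral

variable {k k' l l' c κ b p : ℝ}

lemma one_sub_sq_mul_sin_sq_pos (hk : k ^ 2 < 1) (θ : ℝ) : 0 < 1 - k ^ 2 * sin θ ^ 2 := by
  nlinarith [sin_sq_le_one θ, sq_nonneg (sin θ), sq_nonneg k]

lemma continuous_ellipticIntegrand (hk : k ^ 2 < 1) :
    Continuous fun θ : ℝ => (1 - k ^ 2 * sin θ ^ 2) ^ (-(1 / 2) : ℝ) :=
  Continuous.rpow_const (by fun_prop) fun θ => Or.inl (one_sub_sq_mul_sin_sq_pos hk θ).ne'

lemma ellipticK_pos (hk : k ^ 2 < 1) : 0 < ellipticK k :=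
  intervalIntegral.intervalIntegral_pos_of_pos
    ((continuous_ellipticIntegrand hk).intervalIntegrable _ _)
    (fun θ => rpow_pos_of_pos (one_sub_sq_mul_sin_sq_pos hk θ) _) (by positivity)

lemma ellipticK_congr_sq (h : k ^ 2 = l ^ 2) : ellipticK k = ellipticK l := by
  simp only [ellipticK, h]

lemma ellipticK_lt_ellipticK (hkl : k ^ 2 < l ^ 2) (hl : l ^ 2 < 1) :
    ellipticK k < ellipticK l := by
  have hpi : 0 < π / 2 := by positivity
  refine intervalIntegral.integral_lt_integral_of_continuousOn_of_le_of_exists_lt hpi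
    (continuous_ellipticIntegrand (hkl.trans hl)).continuousOn
    (continuous_ellipticIntegrand hl).continuousOn (fun θ _ => ?_) ⟨π / 2, ⟨hpi.le, le_rfl⟩, ?_⟩
  · exact rpow_le_rpow_of_nonpos (one_sub_sq_mul_sin_sq_pos hl θ) (by gcongr) (by norm_num)
  · exact rpow_lt_rpow_of_neg (one_sub_sq_mul_sin_sq_pos hl _) (by simpa using hkl) (by norm_num)

lemma sq_le_sq_of_ellipticK_eq_mul (hk : k ^ 2 < 1) (hl' : l' ^ 2 < 1)
    (hkl : k ^ 2 + k' ^ 2 = l ^ 2 + l' ^ 2) (h : ellipticK l = c * ellipticK k)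
    (h' : ellipticK l' = c * ellipticK k') : k ^ 2 ≤ l ^ 2 := by
  by_contra! hlt
  have hlt' : k' ^ 2 < l' ^ 2 := by linarith
  have hc : c < 1 := by
    have := ellipticK_lt_ellipticK hlt hk
    rwa [h, mul_lt_iff_lt_one_left (ellipticK_pos hk)] at this
  have hc' : 1 < c := by
    have := ellipticK_lt_ellipticK hlt' hl'
    rwa [h', lt_mul_iff_one_lt_left (ellipticK_pos (hlt'.trans hl'))] at this
  exact hc'.not_gt hc

/-- The modulus is determined by the ratio `K / K'`, which increases with it. -/
theorem sq_eq_sq_of_ellipticK_eq_mul (hk : k ^ 2 < 1) (hk' : k' ^ 2 < 1) (hl : l ^ 2 < 1)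
    (hl' : l' ^ 2 < 1) (hkl : k ^ 2 + k' ^ 2 = l ^ 2 + l' ^ 2)
    (h : ellipticK l = c * ellipticK k) (h' : ellipticK l' = c * ellipticK k') :
    l ^ 2 = k ^ 2 ∧ c = 1 := by
  have hsq : l ^ 2 = k ^ 2 :=
    le_antisymm (by linarith [sq_le_sq_of_ellipticK_eq_mul hk' hl (by linarith) h' h])
      (sq_le_sq_of_ellipticK_eq_mul hk hl' hkl h h')
  refine ⟨hsq, ?_⟩
  rw [ellipticK_congr_sq hsq] at h
  exact (mul_eq_right₀ (ellipticK_pos hk).ne').mp h.symm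

/-- The incomplete elliptic integral of the first kind, in terms of the modulus `k` and the
amplitude `φ`. -/
noncomputable def ellipticF (k φ : ℝ) : ℝ :=
  ∫ θ in (0 : ℝ)..φ, (1 - k ^ 2 * sin θ ^ 2) ^ (-(1 / 2) : ℝ)

lemma hasDerivAt_ellipticF (hk : k ^ 2 < 1) (φ : ℝ) :
    HasDerivAt (ellipticF k) (√(1 - k ^ 2 * sin φ ^ 2))⁻¹ φ := by
  have hcont := continuous_ellipticIntegrand hk
  have hderiv := intervalIntegral.integral_hasDerivAt_right (hcont.intervalIntegrable 0 φ)
    (hcont.stronglyMeasurableAtFilter _ _) hcont.continuousAt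
  refine hderiv.congr_deriv ?_
  rw [rpow_neg (one_sub_sq_mul_sin_sq_pos hk φ).le, sqrt_eq_rpow]

lemma continuous_ellipticF (hk : k ^ 2 < 1) : Continuous (ellipticF k) :=
  continuous_iff_continuousAt.mpr fun φ => (hasDerivAt_ellipticF hk φ).continuousAt

lemma ellipticF_pi (hk : k ^ 2 < 1) : ellipticF k π = 2 * ellipticK k := by
  have hint := fun a b =>
    (continuous_ellipticIntegrand hk).intervalIntegrable (μ := volume) a b
  have hreflect : ∫ θ in (π / 2)..π, (1 - k ^ 2 * sin θ ^ 2) ^ (-(1 / 2) : ℝ) = ellipticK k := by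
    have hsub := intervalIntegral.integral_comp_sub_left (a := 0) (b := π / 2)
      (fun θ : ℝ => (1 - k ^ 2 * sin θ ^ 2) ^ (-(1 / 2) : ℝ)) π
    simp only [sin_pi_sub, sub_zero, sub_half] at hsub
    exact hsub.symm
  rw [ellipticF, ← intervalIntegral.integral_add_adjacent_intervals (hint 0 (π / 2)) (hint _ π),
    hreflect, two_mul, ellipticK]

lemma sin_two_mul_arctan (w : ℝ) : sin (2 * arctan w) = 2 * w / (1 + w ^ 2) := by
  have h : 0 < 1 + w ^ 2 := by positivity
  rw [sin_two_mul, sin_arctan, cos_arctan, mul_assoc, div_mul_div_comm, mul_self_sqrt h.le, mul_one,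
    mul_div_assoc]

lemma hasDerivAt_ellipticF_two_mul_arctan_sqrt (hb : 0 < b) (hκ : κ ^ 2 < 1) {x : ℝ}
    (hx : 0 < x) :
    HasDerivAt (fun x => ellipticF κ (2 * arctan √(x / b)))
      (√b / √(x * (x ^ 2 + (2 - 4 * κ ^ 2) * b * x + b ^ 2))) x := by
  have hxb : 0 < x / b := div_pos hx hb
  have hφ := ((((hasDerivAt_id x).div_const b).sqrt hxb.ne').arctan).const_mul 2
  refine ((hasDerivAt_ellipticF hκ _).comp x hφ).congr_deriv ?_
  have hrad := one_sub_sq_mul_sin_sq_pos hκ (2 * arctan √(x / b))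
  simp only [id, sin_two_mul_arctan] at hrad ⊢
  obtain ⟨s, hs, rfl⟩ : ∃ s, 0 < s ∧ s ^ 2 = b := ⟨√b, sqrt_pos.mpr hb, sq_sqrt hb.le⟩
  obtain ⟨w, hw, rfl⟩ : ∃ w, 0 < w ∧ s ^ 2 * w ^ 2 = x :=
    ⟨√(x / s ^ 2), sqrt_pos.mpr hxb, by rw [sq_sqrt hxb.le]; field_simp⟩
  rw [mul_div_cancel_left₀ _ hb.ne', sqrt_sq hw.le] at hrad ⊢
  set D := 1 - κ ^ 2 * (2 * w / (1 + w ^ 2)) ^ 2 with hD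
  have hcubic : s ^ 2 * w ^ 2 * ((s ^ 2 * w ^ 2) ^ 2 + (2 - 4 * κ ^ 2) * s ^ 2 * (s ^ 2 * w ^ 2)
      + (s ^ 2) ^ 2) = (s ^ 3 * w * (1 + w ^ 2)) ^ 2 * D := by
    rw [hD]
    field_simp
    ring
  have hD0 := sqrt_pos.mpr hrad
  rw [hcubic, sqrt_mul (sq_nonneg _), sqrt_sq hs.le, sqrt_sq (by positivity)]
  field_simp [hD0.ne']

/-- With `φ = 2 arctan √(y/b)` the equation becomes `φ' = 2√b √(1 - κ² sin² φ)`, and `φ` runs from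
`0` to `π`. -/
theorem ellipticK_eq_sqrt_mul_of_sq_eq_cubic (hp : 0 < p) (hb : 0 < b) (hκ : κ ^ 2 < 1)
    {y y' : ℝ → ℝ} (hy : ∀ t ∈ Ioo 0 p, HasDerivAt y (y' t) t)
    (hpos : ∀ t ∈ Ioo 0 p, 0 < y t) (hpos' : ∀ t ∈ Ioo 0 p, 0 < y' t)
    (hsq : ∀ t ∈ Ioo 0 p, y' t ^ 2 = 4 * y t * (y t ^ 2 + (2 - 4 * κ ^ 2) * b * y t + b ^ 2))
    (h0 : Tendsto y (𝓝[>] 0) (𝓝 0)) (htop : Tendsto y (𝓝[<] p) atTop) :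
    ellipticK κ = √b * p := by
  set Φ : ℝ → ℝ := fun x => ellipticF κ (2 * arctan √(x / b)) with hΦ
  have hderiv : ∀ t ∈ Ioo 0 p, HasDerivAt (fun t => Φ (y t)) (2 * √b) t := by
    intro t ht
    refine ((hasDerivAt_ellipticF_two_mul_arctan_sqrt hb hκ (hpos t ht)).comp t
      (hy t ht)).congr_deriv ?_
    have hcubic : y t * (y t ^ 2 + (2 - 4 * κ ^ 2) * b * y t + b ^ 2) = (y' t / 2) ^ 2 := by
      linear_combination -hsq t ht / 4
    rw [hcubic, sqrt_sq (half_pos (hpos' t ht)).le]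
    field_simp [(hpos' t ht).ne']
  have hlim0 : Tendsto (fun t => Φ (y t)) (𝓝[>] 0) (𝓝 0) := by
    have hcont : Continuous Φ := (continuous_ellipticF hκ).comp (by fun_prop)
    exact (hcont.tendsto' 0 0 (by simp [hΦ, ellipticF])).comp h0
  have hlimp : Tendsto (fun t => Φ (y t)) (𝓝[<] p) (𝓝 (2 * ellipticK κ)) := by
    have harctan := (tendsto_arctan_atTop.mono_right nhdsWithin_le_nhds).comp
      (tendsto_sqrt_atTop.comp (htop.atTop_div_const hb))
    have hamp := harctan.const_mul 2
    rw [mul_div_cancel₀ π two_ne_zero] at hamp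
    exact ellipticF_pi hκ ▸ ((continuous_ellipticF hκ).tendsto π).comp hamp
  have hftc := intervalIntegral.integral_eq_sub_of_hasDerivAt_of_tendsto hp hderiv
    intervalIntegrable_const hlim0 hlimp
  rw [intervalIntegral.integral_const, smul_eq_mul] at hftc
  linarith

end EllipticIntegral

/-! ### The Weierstrass function of a period lattice -/

section Weierstrass

variable (L : PeriodPair) {L' : PeriodPair} {c w z : ℂ}

lemma hasDerivAt_weierstrassP (hz : z ∉ L.lattice) : HasDerivAt ℘[L] (℘'[L] z) z := by
  rw [← L.deriv_weierstrassP]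
  exact (L.analyticOnNhd_weierstrassP z hz).differentiableAt.hasDerivAt

lemma tendsto_sub_sq_mul_weierstrassP {l : ℂ} (hl : l ∈ L.lattice) :
    Tendsto (fun z => (z - l) ^ 2 * ℘[L] z) (𝓝[≠] l) (𝓝 1) := by
  have hregular : ContinuousAt ℘[L - l] l := (L.analyticAt_weierstrassPExcept l).continuousAt
  have hcont : ContinuousAt (fun z => (z - l) ^ 2 * ℘[L - l] z + 1 - (z - l) ^ 2 / l ^ 2) l := by
    fun_prop
  have hlim : Tendsto (fun z => (z - l) ^ 2 * ℘[L - l] z + 1 - (z - l) ^ 2 / l ^ 2) (𝓝[≠] l)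
      (𝓝 1) := by
    simpa using hcont.tendsto.mono_left nhdsWithin_le_nhds
  refine hlim.congr' ?_
  filter_upwards [self_mem_nhdsWithin] with z hz
  rw [← L.ite_eq_one_sub_sq_mul_weierstrassP l hl z, if_neg (mem_compl_singleton_iff.mp hz)]

lemma isPreconnected_compl_lattice : IsPreconnected (L.lattice : Set ℂ)ᶜ := by
  have : Countable L.lattice := L.latticeEquivProd.toEquiv.countable_iff.mpr inferInstance
  have hcount : (L.lattice : Set ℂ).Countable := Set.to_countable _
  exact (hcount.isPathConnected_compl_of_one_lt_rank (by simp)).isConnected.isPreconnected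

lemma exists_derivWeierstrassP_ne_zero : ∃ z ∉ L.lattice, ℘'[L] z ≠ 0 := by
  by_contra! hzero
  have hopen : IsOpen (L.lattice : Set ℂ)ᶜ := L.isClosed_lattice.isOpen_compl
  obtain ⟨c, hc⟩ := hopen.exists_is_const_of_deriv_eq_zero (isPreconnected_compl_lattice L)
    L.differentiableOn_weierstrassP (by rw [L.deriv_weierstrassP]; exact hzero)
  have hconst : ∀ᶠ z in 𝓝[≠] (0 : ℂ), ℘[L] z = c := by
    filter_upwards [nhdsWithin_le_nhds (L.compl_lattice_sdiff_singleton_mem_nhds 0),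
      self_mem_nhdsWithin] with z hz hz0
    exact hc z fun hmem => hz ⟨hmem, hz0⟩
  have hpole := tendsto_cobounded_of_meromorphicOrderAt_neg
    (L.order_weierstrassP 0 (zero_mem _) ▸ by decide : meromorphicOrderAt ℘[L] 0 < 0)
  exact hpole.not_tendsto (Metric.disjoint_cobounded_nhds c)
    (tendsto_const_nhds.congr' (hconst.mono fun z hz => hz.symm))

/-- Differentiate `℘'² = 4℘³ - g₂℘ - g₃` and cancel `℘'`, which does not vanish identically. -/
theorem deriv_derivWeierstrassP (hz : z ∉ L.lattice) :
    deriv ℘'[L] z = 6 * ℘[L] z ^ 2 - L.g₂ / 2 := by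
  have hopen : IsOpen (L.lattice : Set ℂ)ᶜ := L.isClosed_lattice.isOpen_compl
  have hprod : ∀ w ∈ (L.lattice : Set ℂ)ᶜ,
      ℘'[L] w * (deriv ℘'[L] w - (6 * ℘[L] w ^ 2 - L.g₂ / 2)) = 0 := by
    intro w hw
    have hP := hasDerivAt_weierstrassP L hw
    have hcubic : ℘'[L] ^ 2 =ᶠ[𝓝 w] fun w => 4 * ℘[L] w ^ 3 - L.g₂ * ℘[L] w - L.g₃ :=
      eventuallyEq_of_mem (hopen.mem_nhds hw) L.derivWeierstrassP_sq
    have hderiv := ((L.analyticOnNhd_derivWeierstrassP w hw).differentiableAt.hasDerivAt.pow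
      2).unique <| ((((hP.pow 3).const_mul 4).sub (hP.const_mul L.g₂)).sub_const
        L.g₃).congr_of_eventuallyEq hcubic
    simp only [Nat.cast_ofNat, Nat.add_one_sub_one, pow_one] at hderiv
    linear_combination hderiv / 2
  have hanalytic : AnalyticOnNhd ℂ (fun w => deriv ℘'[L] w - (6 * ℘[L] w ^ 2 - L.g₂ / 2))
      (L.lattice : Set ℂ)ᶜ :=
    L.analyticOnNhd_derivWeierstrassP.deriv.sub
      ((analyticOnNhd_const.mul (L.analyticOnNhd_weierstrassP.pow 2)).sub analyticOnNhd_const)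
  rcases L.analyticOnNhd_derivWeierstrassP.eq_zero_or_eq_zero_of_mul_eq_zero hanalytic hprod
    (isPreconnected_compl_lattice L) with h | h
  · obtain ⟨w, hw, hne⟩ := exists_derivWeierstrassP_ne_zero L
    exact absurd (h w hw) hne
  · exact sub_eq_zero.mp (h z hz)

lemma hasDerivAt_derivWeierstrassP (hz : z ∉ L.lattice) :
    HasDerivAt ℘'[L] (6 * ℘[L] z ^ 2 - L.g₂ / 2) z :=
  deriv_derivWeierstrassP L hz ▸
    (L.analyticOnNhd_derivWeierstrassP z hz).differentiableAt.hasDerivAt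

variable {L}

lemma weierstrassP_mul_of_lattice_mul (hc : c ≠ 0)
    (h : ∀ z, z ∈ L.lattice ↔ c * z ∈ L'.lattice) (z : ℂ) :
    ℘[L'] (c * z) = (c ^ 2)⁻¹ * ℘[L] z := by
  rw [weierstrassP, weierstrassP, ← ((Equiv.mulLeft₀ c hc).subtypeEquiv h).tsum_eq, ← tsum_mul_left]
  refine tsum_congr fun l => ?_
  change 1 / (c * z - c * l) ^ 2 - 1 / (c * l : ℂ) ^ 2 = _
  simp only [one_div, ← mul_sub, mul_pow, mul_inv]

lemma G_of_lattice_mul (hc : c ≠ 0) (h : ∀ z, z ∈ L.lattice ↔ c * z ∈ L'.lattice) (n : ℕ) :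
    L'.G n = (c ^ n)⁻¹ * L.G n := by
  rw [G, G, ← ((Equiv.mulLeft₀ c hc).subtypeEquiv h).tsum_eq, ← tsum_mul_left]
  refine tsum_congr fun l => ?_
  change ((c * l : ℂ) ^ n)⁻¹ = _
  rw [mul_pow, mul_inv]

lemma weierstrassP_conj (h : ∀ z, z ∈ L.lattice ↔ conj z ∈ L.lattice) (z : ℂ) :
    ℘[L] (conj z) = conj (℘[L] z) := by
  rw [weierstrassP, weierstrassP, Complex.conj_tsum,
    ← ((starRingAut (R := ℂ)).toEquiv.subtypeEquiv h).tsum_eq]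
  exact tsum_congr fun l => by simp

lemma derivWeierstrassP_conj (h : ∀ z, z ∈ L.lattice ↔ conj z ∈ L.lattice) (z : ℂ) :
    ℘'[L] (conj z) = conj (℘'[L] z) := by
  rw [derivWeierstrassP, derivWeierstrassP, map_neg, Complex.conj_tsum,
    ← ((starRingAut (R := ℂ)).toEquiv.subtypeEquiv h).tsum_eq]
  exact congrArg _ (tsum_congr fun l => by simp [map_ofNat])

lemma G_conj (h : ∀ z, z ∈ L.lattice ↔ conj z ∈ L.lattice) (n : ℕ) : conj (L.G n) = L.G n := by
  rw [G, Complex.conj_tsum]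
  conv_rhs => rw [← ((starRingAut (R := ℂ)).toEquiv.subtypeEquiv h).tsum_eq]
  exact tsum_congr fun l => by simp

/-! ### The Weierstrass equation at a half period -/

/-- The coefficient `A` in `℘'² = 4f(f² + Af + B)`, where `f = ℘ - ℘(w)` and `w` is a half
period. -/
noncomputable def halfPeriodCoeffA (L : PeriodPair) (w : ℂ) : ℂ := 3 * ℘[L] w

/-- The coefficient `B` in `℘'² = 4f(f² + Af + B)`, where `f = ℘ - ℘(w)` and `w` is a half
period. -/
noncomputable def halfPeriodCoeffB (L : PeriodPair) (w : ℂ) : ℂ := 3 * ℘[L] w ^ 2 - L.g₂ / 4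

lemma derivWeierstrassP_eq_zero_of_two_mul_mem (hw : 2 * w ∈ L.lattice) : ℘'[L] w = 0 := by
  have hperiod := L.derivWeierstrassP_add_coe (-w) ⟨2 * w, hw⟩
  rw [L.derivWeierstrassP_neg, show -w + 2 * w = w by ring] at hperiod
  exact self_eq_neg.mp hperiod

lemma derivWeierstrassP_sq_halfPeriod (hw : 2 * w ∈ L.lattice) (hw' : w ∉ L.lattice)
    (hz : z ∉ L.lattice) :
    ℘'[L] z ^ 2 = 4 * (℘[L] z - ℘[L] w) * ((℘[L] z - ℘[L] w) ^ 2
      + halfPeriodCoeffA L w * (℘[L] z - ℘[L] w) + halfPeriodCoeffB L w) := by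
  have hcubic := L.derivWeierstrassP_sq w hw'
  rw [derivWeierstrassP_eq_zero_of_two_mul_mem hw] at hcubic
  rw [halfPeriodCoeffA, halfPeriodCoeffB]
  linear_combination L.derivWeierstrassP_sq z hz - hcubic

lemma hasDerivAt_derivWeierstrassP_sub (w : ℂ) (hz : z ∉ L.lattice) :
    HasDerivAt ℘'[L] (6 * (℘[L] z - ℘[L] w) ^ 2
      + 4 * halfPeriodCoeffA L w * (℘[L] z - ℘[L] w) + 2 * halfPeriodCoeffB L w) z := by
  refine (hasDerivAt_derivWeierstrassP L hz).congr_deriv ?_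
  rw [halfPeriodCoeffA, halfPeriodCoeffB]
  ring

lemma halfPeriodCoeffA_mul_of_lattice_mul (hc : c ≠ 0)
    (h : ∀ z, z ∈ L.lattice ↔ c * z ∈ L'.lattice) (w : ℂ) :
    halfPeriodCoeffA L' (c * w) = (c ^ 2)⁻¹ * halfPeriodCoeffA L w := by
  rw [halfPeriodCoeffA, halfPeriodCoeffA, weierstrassP_mul_of_lattice_mul hc h]
  ring

lemma halfPeriodCoeffB_mul_of_lattice_mul (hc : c ≠ 0)
    (h : ∀ z, z ∈ L.lattice ↔ c * z ∈ L'.lattice) (w : ℂ) :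
    halfPeriodCoeffB L' (c * w) = (c ^ 4)⁻¹ * halfPeriodCoeffB L w := by
  rw [halfPeriodCoeffB, halfPeriodCoeffB, weierstrassP_mul_of_lattice_mul hc h, g₂, g₂,
    G_of_lattice_mul hc h]
  ring

end Weierstrass

/-! ### Real lattices -/

section RealLattice

/-- `L` is stable under complex conjugation, and `2p` is its smallest positive real element. -/
structure IsRealHalfPeriod (L : PeriodPair) (p : ℝ) : Prop where
  pos : 0 < p
  conj_mem : ∀ z ∈ L.lattice, conj z ∈ L.lattice
  two_mul_mem : (2 * p : ℂ) ∈ L.lattice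
  notMem : ∀ u ∈ Ioo 0 (2 * p), (u : ℂ) ∉ L.lattice

/-- The real function `u ↦ ℘(u + p) - ℘(p)`. -/
noncomputable def realWeierstrassP (L : PeriodPair) (p u : ℝ) : ℝ :=
  (℘[L] (u + p : ℝ)).re - (℘[L] p).re

/-- The real function `u ↦ ℘'(u + p)`. -/
noncomputable def realDerivWeierstrassP (L : PeriodPair) (p u : ℝ) : ℝ :=
  (℘'[L] (u + p : ℝ)).re

lemma realWeierstrassP_zero (L : PeriodPair) (p : ℝ) : realWeierstrassP L p 0 = 0 := by
  rw [realWeierstrassP, zero_add, sub_self]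

namespace IsRealHalfPeriod

variable {L : PeriodPair} {p A B b κ u : ℝ}

lemma mem_iff_conj_mem (hL : IsRealHalfPeriod L p) (z : ℂ) : z ∈ L.lattice ↔ conj z ∈ L.lattice :=
  ⟨hL.conj_mem z, fun h => Complex.conj_conj z ▸ hL.conj_mem _ h⟩

lemma half_notMem (hL : IsRealHalfPeriod L p) : (p : ℂ) ∉ L.lattice :=
  hL.notMem p ⟨hL.pos, by linarith [hL.pos]⟩

lemma add_notMem (hL : IsRealHalfPeriod L p) (hu : u ∈ Ioo (-p) p) :
    ((u + p : ℝ) : ℂ) ∉ L.lattice :=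
  hL.notMem _ ⟨by linarith [hu.1], by linarith [hu.2]⟩

lemma ofReal_re_weierstrassP (hL : IsRealHalfPeriod L p) (u : ℝ) : ((℘[L] u).re : ℂ) = ℘[L] u :=
  Complex.conj_eq_iff_re.mp <| by rw [← weierstrassP_conj hL.mem_iff_conj_mem, Complex.conj_ofReal]

lemma ofReal_realWeierstrassP (hL : IsRealHalfPeriod L p) (u : ℝ) :
    (realWeierstrassP L p u : ℂ) = ℘[L] (u + p : ℝ) - ℘[L] p := by
  rw [realWeierstrassP, Complex.ofReal_sub, hL.ofReal_re_weierstrassP, hL.ofReal_re_weierstrassP]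

lemma ofReal_realDerivWeierstrassP (hL : IsRealHalfPeriod L p) (u : ℝ) :
    (realDerivWeierstrassP L p u : ℂ) = ℘'[L] (u + p : ℝ) :=
  Complex.conj_eq_iff_re.mp <| by
    rw [← derivWeierstrassP_conj hL.mem_iff_conj_mem, Complex.conj_ofReal]

lemma exists_ofReal_eq_halfPeriodCoeffA (hL : IsRealHalfPeriod L p) :
    ∃ A : ℝ, halfPeriodCoeffA L p = A :=
  ⟨3 * (℘[L] p).re, by simp [halfPeriodCoeffA, hL.ofReal_re_weierstrassP]⟩

lemma exists_ofReal_eq_halfPeriodCoeffB (hL : IsRealHalfPeriod L p) :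
    ∃ B : ℝ, halfPeriodCoeffB L p = B := by
  have hg₂ : (L.g₂.re : ℂ) = L.g₂ := Complex.conj_eq_iff_re.mp <| by
    rw [g₂, map_mul, G_conj hL.mem_iff_conj_mem, map_ofNat]
  exact ⟨3 * (℘[L] p).re ^ 2 - L.g₂.re / 4, by
    simp [halfPeriodCoeffB, hL.ofReal_re_weierstrassP, hg₂]⟩

lemma isNewtonSolutionOn (hL : IsRealHalfPeriod L p) (hA : halfPeriodCoeffA L p = A)
    (hB : halfPeriodCoeffB L p = B) :
    IsNewtonSolutionOn (fun x => 6 * x ^ 2 + 4 * A * x + 2 * B) (realWeierstrassP L p)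
      (realDerivWeierstrassP L p) (Ioo (-p) p) where
  hasDerivAt u hu :=
    ((hasDerivAt_weierstrassP L (hL.add_notMem hu)).real_of_complex.comp_add_const u p).sub_const _
  hasDerivAt_velocity u hu := by
    have hforce := hasDerivAt_derivWeierstrassP_sub (L := L) p (hL.add_notMem hu)
    rw [hA, hB, ← hL.ofReal_realWeierstrassP] at hforce
    refine (hforce.real_of_complex.comp_add_const u p).congr_deriv ?_
    norm_cast

lemma realDerivWeierstrassP_sq (hL : IsRealHalfPeriod L p) (hA : halfPeriodCoeffA L p = A)
    (hB : halfPeriodCoeffB L p = B) (hu : u ∈ Ioo (-p) p) :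
    realDerivWeierstrassP L p u ^ 2 = 4 * realWeierstrassP L p u *
      (realWeierstrassP L p u ^ 2 + A * realWeierstrassP L p u + B) := by
  have hsq := derivWeierstrassP_sq_halfPeriod hL.two_mul_mem hL.half_notMem (hL.add_notMem hu)
  rw [hA, hB, ← hL.ofReal_realWeierstrassP, ← hL.ofReal_realDerivWeierstrassP] at hsq
  exact_mod_cast hsq

lemma tendsto_realWeierstrassP (hL : IsRealHalfPeriod L p) :
    Tendsto (realWeierstrassP L p) (𝓝[<] p) atTop := by
  have hne : ∀ᶠ u in 𝓝[<] p, u - p ≠ 0 := by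
    filter_upwards [self_mem_nhdsWithin] with u hu using (sub_neg.mpr hu).ne
  have hsq : Tendsto (fun u : ℝ => (u - p) ^ 2) (𝓝[<] p) (𝓝 0) :=
    ((by fun_prop : Continuous fun u : ℝ => (u - p) ^ 2).tendsto' p 0 (by simp)).mono_left
      nhdsWithin_le_nhds
  have hshift : Tendsto (fun u : ℝ => ((u + p : ℝ) : ℂ)) (𝓝[<] p) (𝓝[≠] (2 * p : ℂ)) := by
    refine tendsto_nhdsWithin_iff.mpr ⟨?_, hne.mono fun u hu h => hu ?_⟩
    · exact ((by fun_prop : Continuous fun u : ℝ => ((u + p : ℝ) : ℂ)).tendsto' p (2 * p)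
        (by push_cast; ring)).mono_left nhdsWithin_le_nhds
    · have hreal : u + p = 2 * p := by exact_mod_cast mem_singleton_iff.mp h
      linarith
  have hpole : Tendsto (fun u : ℝ => (u - p) ^ 2 * (℘[L] (u + p : ℝ)).re) (𝓝[<] p) (𝓝 1) := by
    refine ((Complex.continuous_re.tendsto' 1 1 Complex.one_re).comp
      ((tendsto_sub_sq_mul_weierstrassP L hL.two_mul_mem).comp hshift)).congr fun u => ?_
    simp only [Function.comp_apply]
    rw [← Complex.re_ofReal_mul]
    congr 2
    push_cast
    ring
  have hinv : Tendsto (fun u : ℝ => ((u - p) ^ 2)⁻¹) (𝓝[<] p) atTop :=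
    (tendsto_nhdsWithin_iff.mpr ⟨hsq, hne.mono fun u hu =>
      mem_Ioi.mpr (by positivity)⟩).inv_tendsto_nhdsGT_zero
  refine tendsto_atTop_add_const_right _ _ ((hinv.atTop_mul_pos one_pos hpole).congr' ?_)
  exact hne.mono fun u hu => inv_mul_cancel_left₀ (pow_ne_zero 2 hu) _

lemma coeffB_pos (hL : IsRealHalfPeriod L p) (hA : halfPeriodCoeffA L p = A)
    (hB : halfPeriodCoeffB L p = B) : 0 < B :=
  (hL.isNewtonSolutionOn hA hB).const_coeff_pos hL.pos
    (fun _ hu => hL.realDerivWeierstrassP_sq hA hB hu) (realWeierstrassP_zero L p)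
    hL.tendsto_realWeierstrassP

lemma quadratic_pos (hL : IsRealHalfPeriod L p) (hA : halfPeriodCoeffA L p = A)
    (hB : halfPeriodCoeffB L p = B) {s : ℝ} (hs : 0 < s) : 0 < s ^ 2 + A * s + B :=
  (hL.isNewtonSolutionOn hA hB).quadratic_pos hL.pos
    (fun _ hu => hL.realDerivWeierstrassP_sq hA hB hu) (realWeierstrassP_zero L p)
    hL.tendsto_realWeierstrassP hs

theorem ellipticK_eq (hL : IsRealHalfPeriod L p) (hb : 0 < b) (hκ : κ ^ 2 < 1)
    (hA : halfPeriodCoeffA L p = ((2 - 4 * κ ^ 2) * b : ℝ))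
    (hB : halfPeriodCoeffB L p = (b ^ 2 : ℝ)) : ellipticK κ = √b * p := by
  have hsol := hL.isNewtonSolutionOn hA hB
  have htop := hL.tendsto_realWeierstrassP
  have h0 := realWeierstrassP_zero L p
  have hsub : Ioo 0 p ⊆ Ioo (-p) p := Ioo_subset_Ioo_left (by linarith [hL.pos])
  refine ellipticK_eq_sqrt_mul_of_sq_eq_cubic hL.pos hb hκ (hsol.mono hsub).hasDerivAt
    (fun t ht => h0 ▸ hsol.lt_of_tendsto_atTop (by fun_prop) htop ht)
    (fun t ht => hsol.velocity_pos (by fun_prop) htop ht)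
    (fun t ht => hL.realDerivWeierstrassP_sq hA hB (hsub ht)) ?_ htop
  have hcont := (hsol.hasDerivAt 0 ⟨by linarith [hL.pos], hL.pos⟩).continuousAt.tendsto
  rw [h0] at hcont
  exact hcont.mono_left nhdsWithin_le_nhds

end IsRealHalfPeriod

end RealLattice

/-! ### Rhombic lattices -/

section Rhombic

variable {p q : ℝ}

/-- The periods `p ± qi`: a rhombic lattice with diagonals `2p` and `2qi`. -/
noncomputable def rhombicPair (hp : 0 < p) (hq : 0 < q) : PeriodPair where
  ω₁ := p + q * Complex.I
  ω₂ := p - q * Complex.I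
  indep := by
    rw [LinearIndependent.pair_iff]
    intro s t h
    have hre : p * (s + t) = 0 := by simpa [mul_comm p, add_mul] using congrArg Complex.re h
    have him : q * (s - t) = 0 := by
      have him' : s * q + -(t * q) = 0 := by simpa using congrArg Complex.im h
      linear_combination him'
    have hadd := (mul_eq_zero.mp hre).resolve_left hp.ne'
    have hsub := (mul_eq_zero.mp him).resolve_left hq.ne'
    constructor <;> linarith

variable (hp : 0 < p) (hq : 0 < q)

lemma mem_rhombicPair {z : ℂ} : z ∈ (rhombicPair hp hq).lattice ↔
    ∃ m n : ℤ, (m : ℂ) * (p + q * Complex.I) + n * (p - q * Complex.I) = z :=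
  mem_lattice

lemma isRealHalfPeriod_rhombicPair : IsRealHalfPeriod (rhombicPair hp hq) p where
  pos := hp
  conj_mem z hz := by
    obtain ⟨m, n, rfl⟩ := (mem_rhombicPair hp hq).mp hz
    refine (mem_rhombicPair hp hq).mpr ⟨n, m, ?_⟩
    simp only [map_add, map_sub, map_mul, map_intCast, Complex.conj_ofReal, Complex.conj_I]
    ring
  two_mul_mem := (mem_rhombicPair hp hq).mpr ⟨1, 1, by push_cast; ring⟩
  notMem u hu hmem := by
    obtain ⟨m, n, hmn⟩ := (mem_rhombicPair hp hq).mp hmem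
    have hre : m * p + n * p = u := by simpa using congrArg Complex.re hmn
    have him : m * q - n * q = 0 := by simpa [sub_eq_add_neg] using congrArg Complex.im hmn
    have heq : (n : ℝ) = m := by
      have : (m - n : ℝ) * q = 0 := by linarith
      linarith [(mul_eq_zero.mp this).resolve_right hq.ne']
    have hu' : m * (2 * p) = u := by rw [← hre, heq]; ring
    have hpos : (0 : ℝ) < m := pos_of_mul_pos_left (hu' ▸ hu.1) (by linarith)
    have hlt : (m : ℝ) < 1 := (mul_lt_iff_lt_one_left (by linarith [hu.1, hu.2])).mp (hu' ▸ hu.2)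
    norm_cast at hpos hlt
    omega

lemma mem_rhombicPair_iff_I_mul_mem_swap (z : ℂ) :
    z ∈ (rhombicPair hp hq).lattice ↔ Complex.I * z ∈ (rhombicPair hq hp).lattice := by
  rw [mem_rhombicPair, mem_rhombicPair]
  constructor
  · rintro ⟨m, n, rfl⟩
    exact ⟨n, -m, by push_cast; linear_combination q * (n - m) * Complex.I_sq⟩
  · rintro ⟨m, n, h⟩
    refine ⟨-n, m, mul_left_cancel₀ Complex.I_ne_zero ?_⟩
    rw [← h]
    push_cast
    linear_combination -q * (m + n) * Complex.I_sq

lemma weierstrassP_I_mul_halfPeriod_swap :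
    ℘[rhombicPair hq hp] (Complex.I * p) = ℘[rhombicPair hq hp] q := by
  have hperiod := (rhombicPair hq hp).weierstrassP_sub_coe q
    ⟨_, (rhombicPair hq hp).ω₂_mem_lattice⟩
  rw [← hperiod]
  congr 1
  simp only [rhombicPair]
  ring

lemma halfPeriodCoeffA_rhombicPair_swap :
    halfPeriodCoeffA (rhombicPair hq hp) q = -halfPeriodCoeffA (rhombicPair hp hq) p := by
  have hmul := halfPeriodCoeffA_mul_of_lattice_mul Complex.I_ne_zero
    (mem_rhombicPair_iff_I_mul_mem_swap hp hq) p
  rw [halfPeriodCoeffA, weierstrassP_I_mul_halfPeriod_swap, Complex.I_sq, inv_neg_one,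
    neg_one_mul] at hmul
  exact hmul

lemma halfPeriodCoeffB_rhombicPair_swap :
    halfPeriodCoeffB (rhombicPair hq hp) q = halfPeriodCoeffB (rhombicPair hp hq) p := by
  have hmul := halfPeriodCoeffB_mul_of_lattice_mul Complex.I_ne_zero
    (mem_rhombicPair_iff_I_mul_mem_swap hp hq) p
  rw [halfPeriodCoeffB, weierstrassP_I_mul_halfPeriod_swap, Complex.I_pow_four, inv_one,
    one_mul] at hmul
  exact hmul

/-- The quadratic `x² + Ax + B` is positive on `(0, ∞)`, and so is its mirror image `x² - Ax + B`,
which belongs to the rotated lattice. -/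
lemma sq_lt_four_mul_of_halfPeriodCoeff {A B : ℝ}
    (hA : halfPeriodCoeffA (rhombicPair hp hq) p = A)
    (hB : halfPeriodCoeffB (rhombicPair hp hq) p = B) : A ^ 2 < 4 * B := by
  have hL := isRealHalfPeriod_rhombicPair hp hq
  have hL' := isRealHalfPeriod_rhombicPair hq hp
  have hA' : halfPeriodCoeffA (rhombicPair hq hp) q = (-A : ℝ) := by
    rw [halfPeriodCoeffA_rhombicPair_swap hp hq, hA, Complex.ofReal_neg]
  have hB' := (halfPeriodCoeffB_rhombicPair_swap hp hq).trans hB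
  rcases lt_trichotomy A 0 with h | rfl | h
  · linarith [hL.quadratic_pos hA hB (show 0 < -A / 2 by linarith)]
  · linarith [hL.coeffB_pos hA hB]
  · linarith [hL'.quadratic_pos hA' hB' (show 0 < A / 2 by linarith)]

theorem exists_ellipticK_rhombicPair : ∃ b κ κ' : ℝ, 0 < b ∧ κ ^ 2 < 1 ∧ κ' ^ 2 < 1 ∧
    κ ^ 2 + κ' ^ 2 = 1 ∧ ellipticK κ = √b * p ∧ ellipticK κ' = √b * q ∧
    halfPeriodCoeffA (rhombicPair hp hq) p = ((2 - 4 * κ ^ 2) * b : ℝ) ∧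
    halfPeriodCoeffB (rhombicPair hp hq) p = (b ^ 2 : ℝ) := by
  have hL := isRealHalfPeriod_rhombicPair hp hq
  obtain ⟨A, hA⟩ := hL.exists_ofReal_eq_halfPeriodCoeffA
  obtain ⟨B, hB⟩ := hL.exists_ofReal_eq_halfPeriodCoeffB
  have hdisc := sq_lt_four_mul_of_halfPeriodCoeff hp hq hA hB
  obtain ⟨b, hb, rfl⟩ : ∃ b, 0 < b ∧ b ^ 2 = B :=
    ⟨√B, sqrt_pos.mpr (hL.coeffB_pos hA hB), sq_sqrt (hL.coeffB_pos hA hB).le⟩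
  obtain ⟨hlow, hhigh⟩ := abs_lt.mp
    (abs_lt_of_sq_lt_sq (by linarith : A ^ 2 < (2 * b) ^ 2) (by linarith))
  have hlow' : -2 < A / b := by rwa [lt_div_iff₀ hb, neg_mul]
  have hhigh' : A / b < 2 := by rwa [div_lt_iff₀ hb]
  have hκ : √((2 - A / b) / 4) ^ 2 = (2 - A / b) / 4 := sq_sqrt (by linarith)
  have hκ' : √((2 + A / b) / 4) ^ 2 = (2 + A / b) / 4 := sq_sqrt (by linarith)
  have hAκ : A = (2 - 4 * √((2 - A / b) / 4) ^ 2) * b := by rw [hκ]; field_simp; ring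
  have hAκ' : -A = (2 - 4 * √((2 + A / b) / 4) ^ 2) * b := by rw [hκ']; field_simp; ring
  have hA' : halfPeriodCoeffA (rhombicPair hq hp) q = (-A : ℝ) := by
    rw [halfPeriodCoeffA_rhombicPair_swap hp hq, hA, Complex.ofReal_neg]
  refine ⟨b, √((2 - A / b) / 4), √((2 + A / b) / 4), hb, by linarith, by linarith, by linarith,
    ?_, ?_, hAκ ▸ hA, hB⟩
  · exact hL.ellipticK_eq hb (by linarith) (hA.trans (congrArg _ hAκ)) hB
  · exact (isRealHalfPeriod_rhombicPair hq hp).ellipticK_eq hb (by linarith)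
      (hA'.trans (congrArg _ hAκ')) ((halfPeriodCoeffB_rhombicPair_swap hp hq).trans hB)

/-- The modulus attached to the lattice has the same ratio `K / K'` as `k`, so it is `k`. -/
theorem halfPeriodCoeff_rhombicPair_ellipticK {k k' : ℝ} (hk : k ^ 2 < 1) (hk' : k' ^ 2 < 1)
    (hkk' : k ^ 2 + k' ^ 2 = 1) :
    halfPeriodCoeffA (rhombicPair (ellipticK_pos hk) (ellipticK_pos hk')) (ellipticK k) =
      2 * (1 - 2 * k ^ 2) ∧
    halfPeriodCoeffB (rhombicPair (ellipticK_pos hk) (ellipticK_pos hk')) (ellipticK k) = 1 := by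
  obtain ⟨b, κ, κ', hb, hκ, hκ', hsum, hK, hK', hA, hB⟩ :=
    exists_ellipticK_rhombicPair (ellipticK_pos hk) (ellipticK_pos hk')
  obtain ⟨hsq, hsqrt⟩ :=
    sq_eq_sq_of_ellipticK_eq_mul hk hk' hκ hκ' (hkk'.trans hsum.symm) hK hK'
  obtain rfl : b = 1 := sqrt_eq_one.mp hsqrt
  rw [hA, hB, hsq]
  push_cast
  constructor <;> ring

end Rhombic

/-! ### Derivatives at a half period -/

section QuadraticODE

variable {𝕜 : Type*} [NontriviallyNormedField 𝕜] {f : 𝕜 → 𝕜} {x a b c : 𝕜}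

lemma iteratedDeriv_add_two_of_deriv_deriv_eventuallyEq {n : ℕ} (hf : ContDiffAt 𝕜 n f x)
    (hode : deriv (deriv f) =ᶠ[𝓝 x] fun z => a * f z ^ 2 + b * f z + c) :
    iteratedDeriv (n + 2) f x =
      a * ∑ i ∈ Finset.range (n + 1), n.choose i * iteratedDeriv i f x * iteratedDeriv (n - i) f x
        + b * iteratedDeriv n f x + if n = 0 then c else 0 := by
  simp only [sq] at hode
  rw [iteratedDeriv_succ', iteratedDeriv_succ', hode.iteratedDeriv_eq n,
    iteratedDeriv_fun_add (by fun_prop) (by fun_prop),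
    iteratedDeriv_fun_add (by fun_prop) (by fun_prop), iteratedDeriv_const_mul_field,
    iteratedDeriv_const_mul_field, iteratedDeriv_fun_mul hf hf, iteratedDeriv_const]

lemma iteratedDeriv_mem_of_deriv_deriv_eventuallyEq (S : Subring 𝕜) (ha : a ∈ S) (hb : b ∈ S)
    (hc : c ∈ S) (hf : ContDiffAt 𝕜 ∞ f x)
    (hode : deriv (deriv f) =ᶠ[𝓝 x] fun z => a * f z ^ 2 + b * f z + c) (h₀ : f x ∈ S)
    (h₁ : deriv f x ∈ S) (n : ℕ) : iteratedDeriv n f x ∈ S := by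
  induction n using Nat.strong_induction_on with
  | _ n ih =>
    match n with
    | 0 => rwa [iteratedDeriv_zero]
    | 1 => rwa [iteratedDeriv_one]
    | n + 2 =>
      rw [iteratedDeriv_add_two_of_deriv_deriv_eventuallyEq (hf.of_le (mod_cast le_top)) hode]
      refine S.add_mem (S.add_mem (S.mul_mem ha (S.sum_mem fun i hi => ?_))
        (S.mul_mem hb (ih n (by omega)))) (by split_ifs; exacts [hc, S.zero_mem])
      rw [Finset.mem_range] at hi
      exact S.mul_mem (S.mul_mem (natCast_mem S _) (ih i (by omega))) (ih (n - i) (by omega))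

lemma iteratedDeriv_six_of_deriv_deriv_eventuallyEq (hf : ContDiffAt 𝕜 ∞ f x)
    (hode : deriv (deriv f) =ᶠ[𝓝 x] fun z => a * f z ^ 2 + b * f z + c) (h₀ : f x = 0)
    (h₁ : deriv f x = 0) : iteratedDeriv 6 f x = 6 * a * c ^ 2 + b ^ 2 * c := by
  have hrec (n : ℕ) := iteratedDeriv_add_two_of_deriv_deriv_eventuallyEq (n := n)
    (hf.of_le (mod_cast le_top)) hode
  have h₂ : iteratedDeriv 2 f x = c := by simpa [h₀] using hrec 0
  have h₄ : iteratedDeriv 4 f x = b * c := by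
    simpa [Finset.sum_range_succ, h₀, h₁, h₂] using hrec 2
  have h₆ : iteratedDeriv 6 f x = a * (6 * c * c) + b * (b * c) := by
    simpa [Finset.sum_range_succ, h₀, h₁, h₂, h₄, Nat.choose] using hrec 4
  rw [h₆]
  ring

end QuadraticODE

section HalfPeriod

variable {L : PeriodPair} {w : ℂ}

lemma iteratedDeriv_weierstrassP_sub_eq_sumInvPow (hw : w ∉ L.lattice) (n : ℕ) :
    iteratedDeriv (n + 1) (fun z => ℘[L] z - ℘[L] w) w =
      (n + 2).factorial * L.sumInvPow w (n + 3) := by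
  have hsum := L.iteratedDeriv_weierstrassPExcept_self w (n := n + 1)
  rw [L.weierstrassPExcept_of_notMem w hw, if_neg n.succ_ne_zero] at hsum
  rw [iteratedDeriv_succ', deriv_sub_const_fun, ← iteratedDeriv_succ', hsum]

lemma deriv_weierstrassP_sub_halfPeriod (hw : 2 * w ∈ L.lattice) :
    deriv (fun z => ℘[L] z - ℘[L] w) w = 0 := by
  rw [deriv_sub_const, L.deriv_weierstrassP, derivWeierstrassP_eq_zero_of_two_mul_mem hw]

lemma contDiffAt_weierstrassP_sub (hw : w ∉ L.lattice) :
    ContDiffAt ℂ ∞ (fun z => ℘[L] z - ℘[L] w) w :=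
  ((L.analyticOnNhd_weierstrassP w hw).sub analyticAt_const).contDiffAt

lemma deriv_deriv_weierstrassP_sub (hw : w ∉ L.lattice) :
    deriv (deriv fun z => ℘[L] z - ℘[L] w) =ᶠ[𝓝 w] fun z => 6 * (℘[L] z - ℘[L] w) ^ 2
      + 4 * halfPeriodCoeffA L w * (℘[L] z - ℘[L] w) + 2 * halfPeriodCoeffB L w := by
  filter_upwards [L.isClosed_lattice.isOpen_compl.mem_nhds hw] with z hz
  rw [deriv_sub_const_fun, L.deriv_weierstrassP, (hasDerivAt_derivWeierstrassP_sub w hz).deriv]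

lemma iteratedDeriv_weierstrassP_sub_halfPeriod_mem (S : Subring ℂ) (hw : w ∉ L.lattice)
    (hw₂ : 2 * w ∈ L.lattice) (hA : halfPeriodCoeffA L w ∈ S) (hB : halfPeriodCoeffB L w ∈ S)
    (n : ℕ) : iteratedDeriv n (fun z => ℘[L] z - ℘[L] w) w ∈ S :=
  iteratedDeriv_mem_of_deriv_deriv_eventuallyEq S (ofNat_mem S 6) (S.mul_mem (ofNat_mem S 4) hA)
    (S.mul_mem (ofNat_mem S 2) hB) (contDiffAt_weierstrassP_sub hw)
    (deriv_deriv_weierstrassP_sub hw) (by rw [sub_self]; exact S.zero_mem)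
    (deriv_weierstrassP_sub_halfPeriod hw₂ ▸ S.zero_mem) n

lemma iteratedDeriv_six_weierstrassP_sub_halfPeriod (hw : w ∉ L.lattice)
    (hw₂ : 2 * w ∈ L.lattice) : iteratedDeriv 6 (fun z => ℘[L] z - ℘[L] w) w =
      144 * halfPeriodCoeffB L w ^ 2 + 32 * halfPeriodCoeffA L w ^ 2 * halfPeriodCoeffB L w := by
  rw [iteratedDeriv_six_of_deriv_deriv_eventuallyEq (contDiffAt_weierstrassP_sub hw)
    (deriv_deriv_weierstrassP_sub hw) (sub_self _) (deriv_weierstrassP_sub_halfPeriod hw₂)]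
  ring

end HalfPeriod

/-! ### Moments of `1 / (cosh (q t) - cos (p t))` -/

section EulerIntegral

variable {c : ℂ}

lemma norm_pow_mul_cexp (N : ℕ) (c : ℂ) {t : ℝ} (ht : 0 < t) :
    ‖(t : ℂ) ^ N * Complex.exp (-c * t)‖ = t ^ N * exp (-c.re * t) := by
  rw [norm_mul, norm_pow, Complex.norm_exp, Complex.norm_real, norm_of_nonneg ht.le,
    Complex.re_mul_ofReal, Complex.neg_re]

lemma integrableOn_pow_mul_cexp (N : ℕ) (hc : 0 < c.re) :
    IntegrableOn (fun t : ℝ => (t : ℂ) ^ N * Complex.exp (-c * t)) (Ioi 0) := by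
  have hreal : IntegrableOn (fun t : ℝ => t ^ N * exp (-c.re * t)) (Ioi 0) := by
    have hN : (-1 : ℝ) < N := by linarith [N.cast_nonneg (α := ℝ)]
    simpa only [rpow_natCast, rpow_one] using
      integrableOn_rpow_mul_exp_neg_mul_rpow hN one_pos hc
  refine hreal.mono' (by fun_prop) ?_
  filter_upwards [ae_restrict_mem measurableSet_Ioi] with t ht
  exact (norm_pow_mul_cexp N c ht).le

lemma tendsto_pow_mul_cexp_atTop (N : ℕ) (hc : 0 < c.re) :
    Tendsto (fun t : ℝ => (t : ℂ) ^ N * Complex.exp (-c * t)) atTop (𝓝 0) := by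
  rw [tendsto_zero_iff_norm_tendsto_zero]
  refine (tendsto_rpow_mul_exp_neg_mul_atTop_nhds_zero N c.re hc).congr' ?_
  filter_upwards [eventually_gt_atTop 0] with t ht
  rw [norm_pow_mul_cexp N c ht, rpow_natCast]

lemma hasDerivAt_pow_mul_cexp (N : ℕ) (c : ℂ) (t : ℝ) :
    HasDerivAt (fun t : ℝ => (t : ℂ) ^ (N + 1) * Complex.exp (-c * t))
      ((N + 1) * ((t : ℂ) ^ N * Complex.exp (-c * t))
        - c * ((t : ℂ) ^ (N + 1) * Complex.exp (-c * t))) t := by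
  refine HasDerivAt.comp_ofReal (e := fun z : ℂ => z ^ (N + 1) * Complex.exp (-c * z)) ?_
  refine ((hasDerivAt_pow (N + 1) (t : ℂ)).mul
    (((hasDerivAt_id (t : ℂ)).const_mul (-c)).cexp)).congr_deriv ?_
  push_cast
  simp only [id_eq, mul_one]
  ring

theorem integral_pow_mul_cexp (N : ℕ) (hc : 0 < c.re) :
    ∫ t in Ioi (0 : ℝ), (t : ℂ) ^ N * Complex.exp (-c * t) = N.factorial / c ^ (N + 1) := by
  have hc₀ : c ≠ 0 := by rintro rfl; exact hc.ne rfl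
  induction N with
  | zero => simpa using integral_exp_mul_complex_Ioi (a := -c) (by simpa using hc) 0
  | succ N ih =>
    have hint := (integrableOn_pow_mul_cexp N hc).const_mul (N + 1 : ℂ)
    have hint' := (integrableOn_pow_mul_cexp (N + 1) hc).const_mul c
    have hparts := integral_Ioi_of_hasDerivAt_of_tendsto'
      (fun t _ => hasDerivAt_pow_mul_cexp N c t) (hint.sub hint')
      (tendsto_pow_mul_cexp_atTop (N + 1) hc)
    rw [integral_sub hint hint', integral_const_mul, integral_const_mul, ih, Complex.ofReal_zero,
      zero_pow N.succ_ne_zero, zero_mul, sub_zero, sub_eq_zero] at hparts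
    refine mul_left_cancel₀ hc₀ ?_
    rw [← hparts, Nat.factorial_succ]
    push_cast
    field_simp
    ring

lemma integral_norm_pow_mul_cexp (N : ℕ) (hc : 0 < c.re) :
    ∫ t in Ioi (0 : ℝ), ‖(t : ℂ) ^ N * Complex.exp (-c * t)‖ =
      N.factorial / c.re ^ (N + 1) := by
  have hreal := integral_pow_mul_cexp N (c := c.re) (by rwa [Complex.ofReal_re])
  rw [setIntegral_congr_fun measurableSet_Ioi fun t ht => norm_pow_mul_cexp N c ht]
  exact_mod_cast hreal

end EulerIntegral

section Expansion

lemma hasSum_mul_of_hasSum {ι κ : Type*} {f : ι → ℂ} {g : κ → ℂ} {a b : ℂ} (hf : HasSum f a)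
    (hg : HasSum g b) : HasSum (fun m : ι × κ => f m.1 * g m.2) (a * b) :=
  hf.mul hg (summable_mul_of_summable_norm hf.summable.norm hg.summable.norm)

lemma hasSum_inv_sinh {a : ℂ} (ha : 0 < a.re) :
    HasSum (fun r : ℕ => 2 * Complex.exp (-((2 * r + 1) * a))) (Complex.sinh a)⁻¹ := by
  have hnorm : ‖Complex.exp (-(2 * a))‖ < 1 := by
    rw [Complex.norm_exp, exp_lt_one_iff]
    simpa using ha
  have hgeom := (hasSum_geometric_of_norm_lt_one hnorm).mul_left (2 * Complex.exp (-a))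
  have hfactor : Complex.sinh a = (2 * Complex.exp (-a))⁻¹ * (1 - Complex.exp (-(2 * a))) := by
    rw [Complex.sinh, mul_inv, ← Complex.exp_neg, neg_neg, mul_assoc, mul_sub, mul_one,
      ← Complex.exp_add]
    ring_nf
  rw [hfactor, mul_inv, inv_inv]
  refine hgeom.congr_fun fun r => ?_
  rw [← Complex.exp_nat_mul, mul_assoc, ← Complex.exp_add]
  ring_nf

lemma cosh_sub_cos_eq_sinh_mul_sinh (x y : ℂ) : Complex.cosh x - Complex.cos y =
    2 * (Complex.sinh ((x - y * Complex.I) / 2) * Complex.sinh ((x + y * Complex.I) / 2)) := by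
  calc Complex.cosh x - Complex.cos y
      = Complex.cosh ((x + y * Complex.I) / 2 + (x - y * Complex.I) / 2)
        - Complex.cosh ((x + y * Complex.I) / 2 - (x - y * Complex.I) / 2) := by
        rw [← Complex.cosh_mul_I]; ring_nf
    _ = _ := by rw [Complex.cosh_add, Complex.cosh_sub]; ring

/-- The exponents in `1 / (cosh (q t) - cos (p t)) = 2 ∑ exp (-freq p q (r, s) t)`, where `r` and
`s` run over `ℕ`. They are indexed by all of `ℤ × ℤ`, over which they fill a coset of a lattice. -/
noncomputable def freq (p q : ℝ) (m : ℤ × ℤ) : ℂ :=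
  (m.1 + m.2 + 1) * q - (m.1 - m.2) * p * Complex.I

/-- The `N`-th moment on `(0, ∞)` of `1 / (cosh (q t) - cos (p t))`. -/
noncomputable def coshCosMoment (p q : ℝ) (N : ℕ) : ℝ :=
  ∫ t in Ioi 0, t ^ N / (cosh (q * t) - cos (p * t))

variable (p : ℝ) {q : ℝ}

lemma freq_re (p q : ℝ) (m : ℤ × ℤ) : (freq p q m).re = (m.1 + m.2 + 1) * q := by
  simp [freq]

lemma freq_natCast_re_pos (hq : 0 < q) (m : ℕ × ℕ) : 0 < (freq p q (m.1, m.2)).re := by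
  rw [freq_re]
  push_cast
  positivity

lemma hasSum_inv_cosh_sub_cos (hq : 0 < q) {t : ℝ} (ht : 0 < t) :
    HasSum (fun m : ℕ × ℕ => 2 * Complex.exp (-freq p q (m.1, m.2) * t))
      ((cosh (q * t) - cos (p * t))⁻¹ : ℝ) := by
  have hqt : 0 < q * t := mul_pos hq ht
  have hminus := hasSum_inv_sinh (a := (q * t - p * t * Complex.I) / 2) (by simpa using hqt)
  have hplus := hasSum_inv_sinh (a := (q * t + p * t * Complex.I) / 2) (by simpa using hqt)
  have hprod := (hasSum_mul_of_hasSum hminus hplus).mul_left 2⁻¹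
  push_cast
  rw [cosh_sub_cos_eq_sinh_mul_sinh, mul_inv, mul_inv]
  refine hprod.congr_fun fun m => ?_
  rw [mul_mul_mul_comm, ← Complex.exp_add, freq]
  push_cast
  ring_nf

lemma summable_inv_add_add_one_pow {w : ℕ} (hw : 2 < w) :
    Summable fun m : ℕ × ℕ => ((m.1 + m.2 + 1 : ℝ) ^ w)⁻¹ := by
  have hhalf : (1 : ℝ) < w / 2 := by
    have : (2 : ℝ) < w := mod_cast hw
    linarith
  have hone : Summable fun r : ℕ => ((r + 1 : ℝ) ^ (w / 2 : ℝ))⁻¹ := by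
    simpa using (summable_nat_add_iff 1).mpr (summable_nat_rpow_inv.mpr hhalf)
  refine (hone.mul_of_nonneg hone (fun r => by positivity) fun s => by positivity).of_nonneg_of_le
    (fun m => by positivity) fun m => ?_
  rw [← mul_inv]
  refine inv_anti₀ (by positivity) ?_
  calc ((m.1 : ℝ) + 1) ^ (w / 2 : ℝ) * (m.2 + 1) ^ (w / 2 : ℝ)
      ≤ ((m.1 : ℝ) + m.2 + 1) ^ (w / 2 : ℝ) * (m.1 + m.2 + 1) ^ (w / 2 : ℝ) := by
        gcongr <;> linarith [m.1.cast_nonneg (α := ℝ), m.2.cast_nonneg (α := ℝ)]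
    _ = (m.1 + m.2 + 1) ^ w := by
        rw [← rpow_add (by positivity), add_halves, rpow_natCast]

theorem hasSum_coshCosMoment (hq : 0 < q) {N : ℕ} (hN : 2 ≤ N) :
    HasSum (fun m : ℕ × ℕ => (freq p q (m.1, m.2) ^ (N + 1))⁻¹)
      (coshCosMoment p q N / (2 * N.factorial) : ℂ) := by
  let term : ℕ × ℕ → ℝ → ℂ := fun m t =>
    2 * ((t : ℂ) ^ N * Complex.exp (-freq p q (m.1, m.2) * t))
  have hintegral (m : ℕ × ℕ) : ∫ t in Ioi (0 : ℝ), term m t =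
      2 * N.factorial * (freq p q (m.1, m.2) ^ (N + 1))⁻¹ := by
    rw [integral_const_mul, integral_pow_mul_cexp N (freq_natCast_re_pos p hq m), div_eq_mul_inv,
      mul_assoc]
  have hnorm (m : ℕ × ℕ) : ∫ t in Ioi (0 : ℝ), ‖term m t‖ =
      2 * N.factorial * (q ^ (N + 1))⁻¹ * ((m.1 + m.2 + 1 : ℝ) ^ (N + 1))⁻¹ := by
    simp only [term, norm_mul (2 : ℂ), Complex.norm_ofNat, integral_const_mul,
      integral_norm_pow_mul_cexp N (freq_natCast_re_pos p hq m), freq_re, mul_pow]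
    push_cast
    field_simp
  have hexpand : ∀ t ∈ Ioi (0 : ℝ),
      ((t ^ N / (cosh (q * t) - cos (p * t)) : ℝ) : ℂ) = ∑' m, term m t := by
    intro t ht
    rw [div_eq_mul_inv, Complex.ofReal_mul, Complex.ofReal_pow,
      ← ((hasSum_inv_cosh_sub_cos p hq ht).mul_left ((t : ℂ) ^ N)).tsum_eq]
    exact tsum_congr fun m => mul_left_comm _ _ _
  have hsum := hasSum_integral_of_summable_integral_norm (F := term) (μ := volume.restrict (Ioi 0))
    (fun m => (integrableOn_pow_mul_cexp N (freq_natCast_re_pos p hq m)).const_mul 2)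
    (((summable_inv_add_add_one_pow (by omega)).mul_left _).congr fun m => (hnorm m).symm)
  rw [coshCosMoment, ← integral_complex_ofReal, setIntegral_congr_fun measurableSet_Ioi hexpand]
  have hfactorial : (2 * N.factorial : ℂ) ≠ 0 := by simp [N.factorial_ne_zero]
  refine (hsum.div_const _).congr_fun fun m => ?_
  rw [hintegral, mul_div_cancel_left₀ _ hfactorial]

end Expansion

/-! ### The moments as a lattice sum -/

section LatticeSum

lemma hasSum_int_prod_int_of_quadrants {α : Type*} [AddCommMonoid α] [TopologicalSpace α]
    [ContinuousAdd α] {f : ℤ × ℤ → α} {a b c d : α}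
    (ha : HasSum (fun m : ℕ × ℕ => f (m.1, m.2)) a)
    (hb : HasSum (fun m : ℕ × ℕ => f (m.1, -(m.2 + 1))) b)
    (hc : HasSum (fun m : ℕ × ℕ => f (-(m.1 + 1), m.2)) c)
    (hd : HasSum (fun m : ℕ × ℕ => f (-(m.1 + 1), -(m.2 + 1))) d) :
    HasSum f ((a + b) + (c + d)) := by
  let e : ℤ × ℤ ≃ (ℕ × ℕ ⊕ ℕ × ℕ) ⊕ (ℕ × ℕ ⊕ ℕ × ℕ) :=
    ((Equiv.intEquivNatSumNat.prodCongr Equiv.intEquivNatSumNat).trans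
      (Equiv.sumProdDistrib ℕ ℕ (ℕ ⊕ ℕ))).trans
      (Equiv.sumCongr (Equiv.prodSumDistrib ℕ ℕ ℕ) (Equiv.prodSumDistrib ℕ ℕ ℕ))
  simp only [← Int.negSucc_eq] at hb hc hd
  exact e.symm.hasSum_iff.mp (HasSum.sum (HasSum.sum ha hb) (HasSum.sum hc hd))

variable {p q : ℝ}

lemma freq_neg_neg (p q : ℝ) (r s : ℤ) : freq p q (-(r + 1), -(s + 1)) = -freq p q (r, s) := by
  simp only [freq]
  push_cast
  ring

lemma freq_neg_right (p q : ℝ) (r s : ℤ) :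
    freq q p (r, -(s + 1)) = -(Complex.I * freq p q (s, r)) := by
  simp only [freq]
  push_cast
  linear_combination ((r : ℂ) - s) * p * Complex.I_sq

lemma freq_neg_left (p q : ℝ) (r s : ℤ) :
    freq q p (-(r + 1), s) = Complex.I * freq p q (s, r) := by
  simp only [freq]
  push_cast
  linear_combination ((s : ℂ) - r) * p * Complex.I_sq

lemma inv_I_mul_pow (z : ℂ) (n : ℕ) :
    ((Complex.I * z) ^ (2 * n + 4))⁻¹ = (-1) ^ n * (z ^ (2 * n + 4))⁻¹ := by
  have hI : Complex.I ^ (2 * n + 4) = (-1) ^ n := by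
    rw [pow_add, pow_mul, Complex.I_sq, Complex.I_pow_four, mul_one]
  rw [mul_pow, hI, mul_inv, ← inv_pow, inv_neg_one]

/-- Rotation by a right angle exchanges the quadrants of the lattice as well as the two moments. -/
theorem hasSum_freq_inv_pow (hp : 0 < p) (hq : 0 < q) (n : ℕ) :
    HasSum (fun m => (freq q p m ^ (2 * n + 4))⁻¹)
      ((coshCosMoment q p (2 * n + 3) + (-1) ^ n * coshCosMoment p q (2 * n + 3)) /
        (2 * n + 3).factorial : ℂ) := by
  have hplus : HasSum (fun m : ℕ × ℕ => (freq q p (m.1, m.2) ^ (2 * n + 4))⁻¹) _ :=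
    hasSum_coshCosMoment q hp (by omega)
  have hminus : HasSum (fun m : ℕ × ℕ => (-1) ^ n * (freq p q (m.2, m.1) ^ (2 * n + 4))⁻¹) _ :=
    ((Equiv.prodComm ℕ ℕ).hasSum_iff.mpr (hasSum_coshCosMoment p hq (by omega))).mul_left _
  have heven : Even (2 * n + 4) := ⟨n + 2, by ring⟩
  have hquadrants := hasSum_int_prod_int_of_quadrants
    (f := fun m => (freq q p m ^ (2 * n + 4))⁻¹) hplus
    (hminus.congr_fun fun m => by rw [freq_neg_right, heven.neg_pow, inv_I_mul_pow])
    (hminus.congr_fun fun m => by rw [freq_neg_left, inv_I_mul_pow])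
    (hplus.congr_fun fun m => by rw [freq_neg_neg, heven.neg_pow])
  have hvalue (x y d : ℂ) : x / (2 * d) + (-1) ^ n * (y / (2 * d)) +
      ((-1) ^ n * (y / (2 * d)) + x / (2 * d)) = (x + (-1) ^ n * y) / d := by
    rw [mul_comm 2 d, ← div_div, ← div_div]
    ring
  rwa [hvalue] at hquadrants

lemma hasSum_freq_inv_pow_sumInvPow (hp : 0 < p) (hq : 0 < q) {w : ℕ} (hw : 2 < w) :
    HasSum (fun m => (freq q p m ^ w)⁻¹) ((rhombicPair hp hq).sumInvPow p w) := by
  let L := rhombicPair hp hq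
  let e : ℤ × ℤ ≃ L.lattice :=
    ((Equiv.prodComm ℤ ℤ).trans ((Equiv.addRight 1).prodCongr (Equiv.addRight 1))).trans
      L.latticeEquivProd.symm.toEquiv
  have he (m : ℤ × ℤ) : (e m : ℂ) - p = freq q p m := by
    have hcoord : (e m : ℂ) = (m.2 + 1 : ℤ) * L.ω₁ + (m.1 + 1 : ℤ) * L.ω₂ :=
      L.latticeEquiv_symm_apply (m.2 + 1, m.1 + 1)
    rw [hcoord, freq]
    simp only [L, rhombicPair]
    push_cast
    ring
  exact (e.hasSum_iff.mpr (L.hasSum_sumInvPow p hw)).congr_fun fun m => by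
    rw [Function.comp_apply, he]

theorem coshCosMoment_add_coshCosMoment (hp : 0 < p) (hq : 0 < q) (n : ℕ) :
    (coshCosMoment q p (2 * n + 3) + (-1) ^ n * coshCosMoment p q (2 * n + 3) : ℂ) =
      iteratedDeriv (2 * n + 2)
        (fun z => ℘[rhombicPair hp hq] z - ℘[rhombicPair hp hq] p) p := by
  have hsum := (hasSum_freq_inv_pow hp hq n).unique
    (hasSum_freq_inv_pow_sumInvPow hp hq (by omega))
  rw [iteratedDeriv_weierstrassP_sub_eq_sumInvPow
    (isRealHalfPeriod_rhombicPair hp hq).half_notMem (2 * n + 1), ← hsum,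
    mul_div_cancel₀ _ (Nat.cast_ne_zero.mpr (Nat.factorial_ne_zero _))]

end LatticeSum

/-! ### Kuznetsov's moment integrals -/

section KuznetsovMoments

lemma integral_pow_div_cosh_sub_cos_sqrt (p q : ℝ) (n : ℕ) :
    ∫ x in Ioi (0 : ℝ), x ^ n / (cosh (q * √x) - cos (p * √x)) =
      2 * coshCosMoment p q (2 * n + 1) := by
  rw [coshCosMoment, ← integral_const_mul, ← integral_comp_rpow_Ioi_of_pos two_pos]
  refine setIntegral_congr_fun measurableSet_Ioi fun t (ht : 0 < t) => ?_
  have hpow : t ^ ((2 : ℝ) - 1) = t := by norm_num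
  simp only [hpow, rpow_two, sqrt_sq ht.le, smul_eq_mul]
  ring

lemma Iminus_eq_coshCosMoment (k : ℝ) (n : ℕ) :
    Iminus k n = -2 * (-1) ^ n *
      (coshCosMoment (ellipticK √(1 - k ^ 2)) (ellipticK k) (2 * n + 3) +
        (-1) ^ n * coshCosMoment (ellipticK k) (ellipticK √(1 - k ^ 2)) (2 * n + 3)) := by
  have hsq : ((-1 : ℝ) ^ n) * (-1) ^ n = 1 := by rw [← mul_pow, neg_one_mul, neg_neg, one_pow]
  have hneg (x : ℝ) : x ^ (n + 1) /
      (cos (ellipticK k * √x) - cosh (ellipticK √(1 - k ^ 2) * √x)) =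
      -(x ^ (n + 1) / (cosh (ellipticK √(1 - k ^ 2) * √x) - cos (ellipticK k * √x))) := by
    rw [← div_neg, neg_sub]
  simp only [Iminus, hneg, integral_neg, integral_pow_div_cosh_sub_cos_sqrt]
  linear_combination
    2 * coshCosMoment (ellipticK k) (ellipticK √(1 - k ^ 2)) (2 * n + 3) * hsq

theorem Iminus_eq_iteratedDeriv {k : ℝ} (n : ℕ) (hK : 0 < ellipticK k)
    (hK' : 0 < ellipticK √(1 - k ^ 2)) :
    (Iminus k n : ℂ) = -2 * (-1) ^ n * iteratedDeriv (2 * n + 2)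
      (fun z => ℘[rhombicPair hK hK'] z - ℘[rhombicPair hK hK'] (ellipticK k)) (ellipticK k) := by
  rw [← coshCosMoment_add_coshCosMoment, Iminus_eq_coshCosMoment]
  push_cast
  rfl

theorem Iminus_value_and_rationality_general {k : ℝ} (hk₀ : k ≠ 0) (hk : k ^ 2 < 1) :
    Iminus k 2 = -32 * (17 - 32 * k ^ 2 + 32 * k ^ 4) ∧
    ∀ n : ℕ, Iminus k n ∈ Subring.closure {k ^ 2} := by
  have hsq : √(1 - k ^ 2) ^ 2 = 1 - k ^ 2 := sq_sqrt (by linarith)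
  have hk' : √(1 - k ^ 2) ^ 2 < 1 := by rw [hsq]; linarith [pow_pos (abs_pos.mpr hk₀) 2, sq_abs k]
  obtain ⟨hA, hB⟩ := halfPeriodCoeff_rhombicPair_ellipticK hk hk' (by linarith)
  have hL := isRealHalfPeriod_rhombicPair (ellipticK_pos hk) (ellipticK_pos hk')
  have hI (n : ℕ) := Iminus_eq_iteratedDeriv n (ellipticK_pos hk) (ellipticK_pos hk')
  constructor
  · have hI₂ := hI 2
    rw [iteratedDeriv_six_weierstrassP_sub_halfPeriod hL.half_notMem hL.two_mul_mem, hA, hB] at hI₂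
    rw [← Complex.ofReal_inj, hI₂]
    push_cast
    ring
  · intro n
    let S := (Subring.closure {k ^ 2}).map Complex.ofRealHom
    have hk₂ : (k ^ 2 : ℂ) ∈ S := ⟨k ^ 2, Subring.subset_closure rfl, by simp⟩
    have hmem : (Iminus k n : ℂ) ∈ S := by
      rw [hI]
      refine S.mul_mem (S.mul_mem (S.neg_mem (ofNat_mem S 2)) (S.pow_mem (S.neg_mem S.one_mem) n))
        (iteratedDeriv_weierstrassP_sub_halfPeriod_mem S hL.half_notMem hL.two_mul_mem ?_ ?_ _)
      · rw [hA]
        exact S.mul_mem (ofNat_mem S 2) (S.sub_mem S.one_mem (S.mul_mem (ofNat_mem S 2) hk₂))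
      · rw [hB]
        exact S.one_mem
    obtain ⟨x, hx, hxI⟩ := hmem
    rwa [← Complex.ofReal_injective hxI]

end KuznetsovMoments

theorem Iminus_value_and_rationality (k : ℝ) (hk : k ∈ Set.Ioo (0 : ℝ) 1) :
    Iminus k 2 = -32 * (17 - 32 * k ^ 2 + 32 * k ^ 4) ∧
    ((∃ r : ℚ, (r : ℝ) = k ^ 2) → ∀ n : ℕ, ∃ r : ℚ, (r : ℝ) = Iminus k n) := by
  have hgeneral := Iminus_value_and_rationality_general hk.1.ne' (by nlinarith [hk.1, hk.2])
  exact ⟨hgeneral.1, fun hr n => (Subring.closure_le (t := (Rat.castHom ℝ).range)).mpr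
    (singleton_subset_iff.mpr hr) (hgeneral.2 n)⟩
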